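/- If a₁, a₂, a₃ are real numbers, each lying in the open interval (2/9, 1/2), then a₁ + a₂ + a₃ - 1/2 > 1/6 > θ(aᵢ) for each i ∈ {1,2,3}. -/

import Mathlib

/-- For `a ∈ [0, 1/2]`, the quantity `θ(a) = a - 1/2 + (1/2)·√((1-2a)/(1+2a))`. -/
noncomputable def theta (a : ℝ) : ℝ :=
  a - 1 / 2 + (1 / 2) * Real.sqrt ((1 - 2 * a) / (1 + 2 * a))

/-- The bound `θ(a) < 1/6` amounts to `√((1-x)/(1+x)) < 4/3 - x` with `x = 2a`. After squaring and
clearing the denominator this follows from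
`(4/3 - x)² (1 + x) - (1 - x) = 2/9 + (1 - x) (5/9 + 2x/3 - x²)`,
whose last factor is positive on `(0, 1)`. -/
theorem theta_lt_one_sixth {a : ℝ} (h : a ∈ Set.Ioo (2 / 9 : ℝ) (1 / 2)) : theta a < 1 / 6 := by
  obtain ⟨hl, hu⟩ := h
  have key : Real.sqrt ((1 - 2 * a) / (1 + 2 * a)) < 4 / 3 - 2 * a := by
    rw [Real.sqrt_lt' (by linarith), div_lt_iff₀ (by linarith)]
    have hq : 0 < 5 / 9 + 2 / 3 * (2 * a) - (2 * a) ^ 2 := by nlinarith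
    have hp : 0 < (1 - 2 * a) * (5 / 9 + 2 / 3 * (2 * a) - (2 * a) ^ 2) :=
      mul_pos (by linarith) hq
    linarith
  unfold theta
  linarith

/-- If `a₁, a₂, a₃ ∈ (2/9, 1/2)`, then `a₁ + a₂ + a₃ - 1/2 > 1/6 > θ(aᵢ)` for each `i`. -/
theorem sum_gt_one_sixth_gt_theta (a₁ a₂ a₃ : ℝ)
    (h₁ : a₁ ∈ Set.Ioo (2 / 9 : ℝ) (1 / 2)) (h₂ : a₂ ∈ Set.Ioo (2 / 9 : ℝ) (1 / 2))
    (h₃ : a₃ ∈ Set.Ioo (2 / 9 : ℝ) (1 / 2)) :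
    a₁ + a₂ + a₃ - 1 / 2 > 1 / 6 ∧
      1 / 6 > theta a₁ ∧ 1 / 6 > theta a₂ ∧ 1 / 6 > theta a₃ := by
  exact ⟨by linarith [h₁.1, h₂.1, h₃.1], theta_lt_one_sixth h₁, theta_lt_one_sixth h₂,
    theta_lt_one_sixth h₃⟩
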